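/- In the path-constrained railway transition system, assume the terminal capacity condition: for every node n, the number of trains i whose path terminates at n (i.e., p_i (L_i) = n) is strictly less than c n. Then, for any configuration k₀, the terminal configuration (every train at the last index of its path) is reachable from k₀ if and only if some safe configuration is reachable from k₀. (Deadlock characterization: the system state is not deadlocked if and only if a schedule driving it to a safe state exists.) -/

import Mathlib

/-- A *single move*: one train `i` advances one step along its path, the
destination node having a free slot not counting train `i`. -/
def Move {I N : Type*} [Fintype I] [DecidableEq I] [DecidableEq N]
    (c : N → ℕ) (L : I → ℕ) (p : ∀ i : I, Fin (L i + 1) → N)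
    (k k' : ∀ i : I, Fin (L i + 1)) : Prop :=
  ∃ (i : I) (h : (k i : ℕ) < L i),
    k' i = ⟨(k i : ℕ) + 1, Nat.succ_lt_succ h⟩ ∧
    (∀ j : I, j ≠ i → k' j = k j) ∧
    (Finset.univ.filter (fun j : I =>
        j ≠ i ∧ p j (k j) = p i ⟨(k i : ℕ) + 1, Nat.succ_lt_succ h⟩)).card
      < c (p i ⟨(k i : ℕ) + 1, Nat.succ_lt_succ h⟩)

/-- Reachability: reflexive–transitive closure of the single-move relation. -/
def Reachable {I N : Type*} [Fintype I] [DecidableEq I] [DecidableEq N]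
    (c : N → ℕ) (L : I → ℕ) (p : ∀ i : I, Fin (L i + 1) → N)
    (k k' : ∀ i : I, Fin (L i + 1)) : Prop :=
  Relation.ReflTransGen (Move c L p) k k'

/-- A configuration is *safe* if every node has a strictly free slot. -/
def SafeConfig {I N : Type*} [Fintype I] [DecidableEq I] [DecidableEq N]
    (c : N → ℕ) (L : I → ℕ) (p : ∀ i : I, Fin (L i + 1) → N)
    (k : ∀ i : I, Fin (L i + 1)) : Prop :=
  ∀ n : N, (Finset.univ.filter (fun i : I => p i (k i) = n)).card < c n

/-!
If every node has a free slot once some train `j` is disregarded, then `j` can run all the way to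
the end of its path while the others stand still. So as long as some train is unfinished, it
suffices to find an unfinished train that may be disregarded in this sense. Suppose `j` may be
disregarded. An unfinished train at the node of `j` may be disregarded instead of `j`, as both
occupy the same node. If every train at that node is finished, the terminal capacity condition
provides a free slot there, so the configuration is safe and any train may be disregarded. Running
trains to their ends one after another therefore never gets stuck.
-/

section Unfinished

open Finset Function

variable {I : Type*} [Fintype I] {L : I → ℕ}

/-- The trains that have not yet reached the end of their path. Running one of them to its end
shrinks this set, which is the termination measure of the schedule. -/
def unfinished (k : ∀ i : I, Fin (L i + 1)) : Finset I :=
  {i | k i ≠ Fin.last (L i)}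

lemma mem_unfinished {k : ∀ i : I, Fin (L i + 1)} {i : I} :
    i ∈ unfinished k ↔ k i ≠ Fin.last (L i) :=
  mem_filter_univ i

lemma unfinished_eq_empty_iff {k : ∀ i : I, Fin (L i + 1)} :
    unfinished k = ∅ ↔ k = fun i => Fin.last (L i) := by
  simp [unfinished, filter_eq_empty_iff, funext_iff]

lemma unfinished_update_last [DecidableEq I] (k : ∀ i : I, Fin (L i + 1)) (j : I) :
    unfinished (update k j (Fin.last (L j))) = (unfinished k).erase j := by
  ext i
  by_cases hij : i = j
  · subst hij
    simp [mem_unfinished]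
  · simp [mem_unfinished, hij]

end Unfinished

section SafeExcept

open Finset Function

variable {I N : Type*} [Fintype I] [DecidableEq I] [DecidableEq N]
  {c : N → ℕ} {L : I → ℕ} {p : ∀ i : I, Fin (L i + 1) → N}
  {k : ∀ i : I, Fin (L i + 1)} {i j : I}

/-- A configuration is *safe except for* train `j` if every node has a free slot when `j` is
disregarded. The occupants are counted as in the free-slot condition of `Move`, so this is what
lets `j` advance freely. -/
def SafeExcept (c : N → ℕ) (L : I → ℕ) (p : ∀ i : I, Fin (L i + 1) → N)
    (k : ∀ i : I, Fin (L i + 1)) (j : I) : Prop :=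
  ∀ n : N, #{i | i ≠ j ∧ p i (k i) = n} < c n

lemma SafeConfig.safeExcept (hk : SafeConfig c L p k) (j : I) : SafeExcept c L p k j :=
  fun n => (card_le_card (monotone_filter_right univ fun _ _ h => h.2)).trans_lt (hk n)

lemma safeExcept_update_iff {x : Fin (L j + 1)} :
    SafeExcept c L p (update k j x) j ↔ SafeExcept c L p k j := by
  refine forall_congr' fun n => ?_
  rw [filter_congr fun i _ => and_congr_right fun hij : i ≠ j => by rw [update_of_ne hij]]

namespace SafeExcept

lemma move_update_succ (hk : SafeExcept c L p k j) (x : Fin (L j)) :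
    Move c L p (update k j x.castSucc) (update k j x.succ) := by
  refine ⟨j, by simp, ?_, fun i hij => ?_, safeExcept_update_iff.2 hk _⟩
  · ext
    simp
  · rw [update_of_ne hij, update_of_ne hij]

lemma reachable_update (hk : SafeExcept c L p k j) {x : Fin (L j + 1)} (hx : k j ≤ x) :
    Reachable c L p k (update k j x) := by
  have reachable_of_eq {y : Fin (L j + 1)} (hy : k j = y) :
      Reachable c L p k (update k j y) := by
    rw [← hy, update_eq_self]
    exact Relation.ReflTransGen.refl
  induction x using Fin.induction with
  | zero => exact reachable_of_eq (Fin.le_zero_iff.1 hx)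
  | succ x ih =>
    obtain heq | hlt := hx.eq_or_lt
    · exact reachable_of_eq heq
    · exact (ih (Fin.le_castSucc_iff.2 hlt)).tail (hk.move_update_succ x)

lemma of_apply_eq (hk : SafeExcept c L p k j) (hij : p i (k i) = p j (k j)) :
    SafeExcept c L p k i := by
  have filter_ne_and (l : I) (n : N) :
      ({m | m ≠ l ∧ p m (k m) = n} : Finset I) = erase {m | p m (k m) = n} l := by
    ext
    simp
  intro n
  have hn := hk n
  simp only [filter_ne_and, card_erase_eq_ite, mem_filter_univ] at hn ⊢
  rwa [hij]

lemma safeConfig (hk : SafeExcept c L p k j)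
    (hj : #{i | p i (k i) = p j (k j)} < c (p j (k j))) : SafeConfig c L p k := by
  intro n
  obtain rfl | hn := eq_or_ne n (p j (k j))
  · exact hj
  · have ne_of_apply_eq (i : I) (hi : p i (k i) = n) : i ≠ j := by
      rintro rfl
      exact hn hi.symm
    refine (card_le_card ?_).trans_lt (hk n)
    exact monotone_filter_right univ fun i _ hi => ⟨ne_of_apply_eq i hi, hi⟩

lemma exists_mem_unfinished (hk : SafeExcept c L p k j)
    (hterm : SafeConfig c L p fun i => Fin.last (L i)) (hne : (unfinished k).Nonempty) :
    ∃ i ∈ unfinished k, SafeExcept c L p k i := by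
  by_cases h : ∃ i ∈ unfinished k, p i (k i) = p j (k j)
  · obtain ⟨i, hi, hij⟩ := h
    exact ⟨i, hi, hk.of_apply_eq hij⟩
  · have finished_of_apply_eq (i : I) (hij : p i (k i) = p j (k j)) : k i = Fin.last (L i) := by
      by_contra hi
      exact h ⟨i, mem_unfinished.2 hi, hij⟩
    have hsafe : SafeConfig c L p k := by
      refine hk.safeConfig ((card_le_card ?_).trans_lt (hterm _))
      exact monotone_filter_right univ fun i _ hij =>
        (congrArg (p i) (finished_of_apply_eq i hij)).symm.trans hij
    obtain ⟨i, hi⟩ := hne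
    exact ⟨i, hi, hsafe.safeExcept i⟩

theorem reachable_last (hk : SafeExcept c L p k j)
    (hterm : SafeConfig c L p fun i => Fin.last (L i)) :
    Reachable c L p k fun i => Fin.last (L i) := by
  induction hs : unfinished k using Finset.strongInduction generalizing k j with
  | H s ih =>
    subst hs
    obtain hempty | hne := (unfinished k).eq_empty_or_nonempty
    · rw [unfinished_eq_empty_iff.1 hempty]
      exact Relation.ReflTransGen.refl
    · obtain ⟨i, hi, hki⟩ := hk.exists_mem_unfinished hterm hne
      have hlt : unfinished (update k i (Fin.last (L i))) ⊂ unfinished k := by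
        rw [unfinished_update_last]
        exact erase_ssubset hi
      exact (hki.reachable_update (Fin.le_last _)).trans
        (ih _ hlt (safeExcept_update_iff.2 hki) rfl)

end SafeExcept

lemma SafeConfig.reachable_last (hk : SafeConfig c L p k)
    (hterm : SafeConfig c L p fun i => Fin.last (L i)) :
    Reachable c L p k fun i => Fin.last (L i) := by
  obtain hI | ⟨⟨j⟩⟩ := isEmpty_or_nonempty I
  · rw [Subsingleton.elim k fun i => Fin.last (L i)]
    exact Relation.ReflTransGen.refl
  · exact (hk.safeExcept j).reachable_last hterm

end SafeExcept

/-- deadlock characterization: under the terminal capacity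
condition, the terminal configuration is reachable from `k₀` if and only if
some safe configuration is reachable from `k₀`. -/
theorem terminal_reachable_iff_safe_reachable
    {I N : Type*} [Fintype I] [DecidableEq I] [DecidableEq N]
    (c : N → ℕ) (L : I → ℕ) (p : ∀ i : I, Fin (L i + 1) → N)
    (hterm : ∀ n : N,
      (Finset.univ.filter (fun i : I => p i (Fin.last (L i)) = n)).card < c n)
    (k₀ : ∀ i : I, Fin (L i + 1)) :
    Reachable c L p k₀ (fun i => Fin.last (L i)) ↔
      ∃ s : ∀ i : I, Fin (L i + 1), SafeConfig c L p s ∧ Reachable c L p k₀ s := by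
  constructor
  · intro hreach
    exact ⟨_, hterm, hreach⟩
  · rintro ⟨s, hs, hreach⟩
    exact hreach.trans (hs.reachable_last hterm)
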